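/- For every integer d ≥ 1, a pair (V0, V1) ∈ ℝ² is an achievable value function of a bi-balanced depth-d complete binary tree if and only if V1 > d and V0 = f_d(V1); that is, there exists a skeleton strategy {r_t}_{t=1}^d bi-balancing the depth-d tree with value function (V0, V1) if and only if V1 > d and V0 = f_d(V1). -/

import Mathlib

/-!
Write the claimed condition symmetrically: `v0 = fd d v1` with `v1 > d` says that
`(v0 - d) * (v1 - d) = d` with `v1 > d` (`fd_iff`). The theorem follows by induction on `d`, removing
the *first* bit. If the root uses the value `p`, then a depth-`(n+2)` strategy bi-balances with value
`(v0, v1)` exactly when its restriction to the subtree below `0` bi-balances with value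
`(v0 - 1/(1-p), v1)` and its restriction to the subtree below `1` with value `(v0, v1 - 1/p)`
(`biBalances_succ`). By induction, with `A = v0 - (n+1)` and `B = v1 - (n+1)`, both subtrees can be
balanced iff `(A - 1/(1-p)) * B = n+1 = A * (B - 1/p)` with `B > 1/p`; this forces
`p = A / (A + B)` and `A * B - (n+1) = A + B`, i.e. `(A - 1) * (B - 1) = n+2`, which is the condition
at depth `n+2`; conversely this `p` works (`root_step`). The induction starts at depth one (`biBalances_one`), where
`v0 = 1/(1-p)` and `v1 = 1/p` for some `p` in `(0, 1)`.
-/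

/-- `f_d(x) = d·(x−(d−1))/(x−d)`. -/
noncomputable def fd (d : ℕ) (x : ℝ) : ℝ := d * (x - ((d : ℝ) - 1)) / (x - d)

/-- `V^0(q^d) = Σ_t (1−q_t)/(1−r_t(q^{t-1}))` for a decisive sequence `q^d ∈ {0,1}^d`. -/
noncomputable def V0 (d : ℕ) (r : (t : Fin d) → (Fin t → Bool) → ℝ)
    (q : Fin d → Bool) : ℝ :=
  ∑ t : Fin d, (1 - if q t then (1:ℝ) else 0) /
    (1 - r t (fun i => q (Fin.castLE t.2.le i)))

/-- `V^1(q^d) = Σ_t q_t/r_t(q^{t-1})` for a decisive sequence `q^d ∈ {0,1}^d`. -/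
noncomputable def V1 (d : ℕ) (r : (t : Fin d) → (Fin t → Bool) → ℝ)
    (q : Fin d → Bool) : ℝ :=
  ∑ t : Fin d, (if q t then (1:ℝ) else 0) / r t (fun i => q (Fin.castLE t.2.le i))

/-- The last bit `q_d` of `q^d`. -/
def lastBit (d : ℕ) (q : Fin d → Bool) : Bool :=
  if h : 0 < d then q ⟨d - 1, by omega⟩ else false

/-- `{r_t}` bi-balances the depth-`d` complete binary tree with value function
`(v0, v1)`: `V^0(q^d) = v0` whenever `q_d = 0`, and `V^1(q^d) = v1` whenever
`q_d = 1`. -/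
def biBalances (d : ℕ) (r : (t : Fin d) → (Fin t → Bool) → ℝ) (v0 v1 : ℝ) : Prop :=
  (∀ q : Fin d → Bool, lastBit d q = false → V0 d r q = v0) ∧
  (∀ q : Fin d → Bool, lastBit d q = true → V1 d r q = v1)

/-- The strategy induced on the subtree below the first bit `b`. -/
def subStrategy {d : ℕ} (r : (t : Fin (d + 1)) → (Fin t → Bool) → ℝ) (b : Bool) :
    (t : Fin d) → (Fin t → Bool) → ℝ :=
  fun t qs => r t.succ (Fin.cons (α := fun _ => Bool) b qs)

/-- The strategy with value `p` at the root that continues with `s b` after the first bit `b`. -/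
def consStrategy {d : ℕ} (p : ℝ) (s : Bool → (t : Fin d) → (Fin t → Bool) → ℝ) :
    (t : Fin (d + 1)) → (Fin t → Bool) → ℝ :=
  fun t => Fin.cases (motive := fun t : Fin (d + 1) => (Fin t → Bool) → ℝ) (fun _ => p)
    (fun t qs => s (qs (0 : Fin (t.1 + 1))) t (fun i => qs (Fin.succ i : Fin (t.1 + 1)))) t

lemma castLE_cons {d : ℕ} (b : Bool) (q : Fin d → Bool) (t : Fin d) :
    (fun i : Fin (t.1 + 1) =>
      (Fin.cons b q : Fin (d + 1) → Bool) (Fin.castLE t.succ.2.le i)) =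
      Fin.cons (α := fun _ => Bool) b (fun i : Fin t => q (Fin.castLE t.2.le i)) := by
  funext i
  refine Fin.cases ?_ (fun j => ?_) i <;> rfl

lemma V0_cons {d : ℕ} (r : (t : Fin (d + 1)) → (Fin t → Bool) → ℝ) (b : Bool)
    (q : Fin d → Bool) :
    V0 (d + 1) r (Fin.cons b q) =
      (1 - if b then (1:ℝ) else 0) / (1 - r 0 Fin.elim0) + V0 d (subStrategy r b) q := by
  unfold V0
  rw [Fin.sum_univ_succ]
  congr 1
  · congr 3
    funext i
    exact i.elim0
  · refine Finset.sum_congr rfl fun t _ => ?_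
    have h := congrArg (r t.succ) (castLE_cons b q t)
    exact congrArg (fun z => (1 - if q t then (1:ℝ) else 0) / (1 - z)) h

lemma V1_cons {d : ℕ} (r : (t : Fin (d + 1)) → (Fin t → Bool) → ℝ) (b : Bool)
    (q : Fin d → Bool) :
    V1 (d + 1) r (Fin.cons b q) =
      (if b then (1:ℝ) else 0) / r 0 Fin.elim0 + V1 d (subStrategy r b) q := by
  unfold V1
  rw [Fin.sum_univ_succ]
  congr 1
  · congr 2
    funext i
    exact i.elim0
  · refine Finset.sum_congr rfl fun t _ => ?_
    have h := congrArg (r t.succ) (castLE_cons b q t)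
    exact congrArg (fun z => (if q t then (1:ℝ) else 0) / z) h

lemma lastBit_cons {n : ℕ} (b : Bool) (q : Fin (n + 1) → Bool) :
    lastBit (n + 2) (Fin.cons b q) = lastBit (n + 1) q := by
  simp only [lastBit, Nat.succ_pos, dite_true]
  rfl

/-- Splitting off the first bit: the term it contributes to `V0` (if it is `0`) or to `V1` (if it is
`1`) is subtracted from that coordinate of the value to be reached in the subtree below. -/
lemma biBalances_succ {n : ℕ} (r : (t : Fin (n + 2)) → (Fin t → Bool) → ℝ) (v0 v1 : ℝ) :
    biBalances (n + 2) r v0 v1 ↔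
      biBalances (n + 1) (subStrategy r false) (v0 - 1 / (1 - r 0 Fin.elim0)) v1 ∧
      biBalances (n + 1) (subStrategy r true) v0 (v1 - 1 / r 0 Fin.elim0) := by
  have hforall : ∀ P : (Fin (n + 2) → Bool) → Prop,
      (∀ q, P q) ↔ (∀ q, P (Fin.cons false q)) ∧ ∀ q, P (Fin.cons true q) := fun P => by
    rw [Fin.forall_fin_succ_pi (P := P), Bool.forall_bool]
  simp only [biBalances]
  rw [hforall, hforall]
  simp only [lastBit_cons, V0_cons, V1_cons, if_true, Bool.false_eq_true, if_false, sub_self,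
    sub_zero, zero_div, zero_add, eq_sub_iff_add_eq']
  tauto

/-- The depth-one tree: `v0 = 1 / (1 - p)` and `v1 = 1 / p`, where `p` is the value at the root. -/
lemma biBalances_one (r : (t : Fin 1) → (Fin t → Bool) → ℝ) (v0 v1 : ℝ) :
    biBalances 1 r v0 v1 ↔ 1 / (1 - r 0 Fin.elim0) = v0 ∧ 1 / r 0 Fin.elim0 = v1 := by
  have he : ∀ q : Fin 1 → Bool, r 0 (fun i => q (Fin.castLE (0 : Fin 1).2.le i)) =
      r 0 Fin.elim0 := fun q => congrArg (r 0) (funext fun i => i.elim0)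
  have h0 : ∀ q, V0 1 r q = (1 - if q 0 then (1:ℝ) else 0) / (1 - r 0 Fin.elim0) := fun q => by
    rw [V0, Fin.sum_univ_one, he]
  have h1 : ∀ q, V1 1 r q = (if q 0 then (1:ℝ) else 0) / r 0 Fin.elim0 := fun q => by
    rw [V1, Fin.sum_univ_one, he]
  have hl : ∀ q : Fin 1 → Bool, lastBit 1 q = q 0 := fun q => rfl
  simp only [biBalances, h0, h1, hl]
  constructor
  · rintro ⟨a, b⟩
    exact ⟨by simpa using a (fun _ => false) rfl, by simpa using b (fun _ => true) rfl⟩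
  · rintro ⟨a, b⟩
    exact ⟨fun q hq => by simpa [hq] using a, fun q hq => by simpa [hq] using b⟩

/-- The graph of `fd d` over `(d, ∞)` is a branch of the hyperbola `(v0 - d) * (v1 - d) = d`. -/
lemma fd_iff (d : ℕ) (v0 v1 : ℝ) :
    ((d : ℝ) < v1 ∧ v0 = fd d v1) ↔ ((d : ℝ) < v1 ∧ (v0 - d) * (v1 - d) = d) := by
  refine and_congr_right fun h => ?_
  have h' : v1 - d ≠ 0 := (sub_pos.2 h).ne'
  rw [fd, eq_div_iff h']
  constructor <;> intro h <;> linarith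

/-- The algebra of the induction step: some root value `p` makes both subtrees satisfy the
condition at depth `m` iff the condition holds at depth `m + 1`. -/
lemma root_step (m v0 v1 : ℝ) (hm : 0 < m) :
    (∃ p ∈ Set.Ioo (0:ℝ) 1, (m < v1 ∧ (v0 - 1 / (1 - p) - m) * (v1 - m) = m) ∧
      (m < v1 - 1 / p ∧ (v0 - m) * (v1 - 1 / p - m) = m)) ↔
      (m + 1 < v1 ∧ (v0 - (m + 1)) * (v1 - (m + 1)) = m + 1) := by
  obtain ⟨A, rfl⟩ : ∃ A, v0 = A + m := ⟨v0 - m, by ring⟩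
  obtain ⟨B, rfl⟩ : ∃ B, v1 = B + m := ⟨v1 - m, by ring⟩
  constructor
  · rintro ⟨p, ⟨hp0, hp1⟩, ⟨hB, h0⟩, hlt, h1⟩
    have hp1' : 0 < 1 - p := sub_pos.2 hp1
    have hone : 1 < 1 / p := by rw [lt_div_iff₀ hp0]; linarith
    refine ⟨by linarith, ?_⟩
    have e0 : B = (A * B - m) * (1 - p) := by
      have : (A + m - 1 / (1 - p) - m) * (B + m - m) * (1 - p) = m * (1 - p) := by rw [h0]
      field_simp at this
      linarith
    have e1 : A = (A * B - m) * p := by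
      have : (A + m - m) * (B + m - 1 / p - m) * p = m * p := by rw [h1]
      field_simp at this
      linarith
    linarith
  · rintro ⟨hB, h⟩
    have hB' : 0 < B - 1 := by linarith
    have hA' : 0 < A - 1 := by
      by_contra hA
      nlinarith
    have hA : 0 < A := by linarith
    have hBp : 0 < B := by linarith
    have hAB : 0 < A + B := by linarith
    have key : A * B = A + B + m := by linarith
    have hq : 1 - A / (A + B) = B / (A + B) := by field_simp; ring
    have e1 : A * (B - (A + B) / A) = m := by field_simp; linarith
    refine ⟨A / (A + B), ⟨by positivity, by rw [div_lt_one hAB]; linarith⟩,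
      ⟨by linarith, ?_⟩, ?_, ?_⟩
    · have e0 : (A - (A + B) / B) * B = m := by field_simp; linarith
      rw [hq, one_div_div]
      linear_combination e0
    · rw [one_div_div]
      have : 0 < B - (A + B) / A := by
        by_contra hc
        nlinarith
      linarith
    · rw [one_div_div]
      linarith

/-- The theorem at depth `n + 1`, with the condition in its symmetric form. -/
lemma achievable_iff (n : ℕ) : ∀ v0 v1 : ℝ,
    (∃ r : (t : Fin (n + 1)) → (Fin t → Bool) → ℝ,
      (∀ (t : Fin (n + 1)) (qs : Fin t → Bool), r t qs ∈ Set.Ioo (0:ℝ) 1) ∧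
      biBalances (n + 1) r v0 v1) ↔
      (((n + 1 : ℕ) : ℝ) < v1 ∧ (v0 - (n + 1 : ℕ)) * (v1 - (n + 1 : ℕ)) = (n + 1 : ℕ)) := by
  induction n with
  | zero =>
    intro v0 v1
    simp only [zero_add, Nat.cast_one]
    constructor
    · rintro ⟨r, hr, hb⟩
      obtain ⟨rfl, rfl⟩ := (biBalances_one r v0 v1).1 hb
      obtain ⟨h0, h1⟩ := hr 0 Fin.elim0
      have h1' : 0 < 1 - r 0 Fin.elim0 := sub_pos.2 h1
      refine ⟨by rw [lt_div_iff₀ h0]; linarith, ?_⟩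
      generalize r 0 Fin.elim0 = p at *
      field_simp
      ring
    · rintro ⟨hv, h⟩
      have hv0 : 0 < v1 := by linarith
      have hv1 : 0 < v1 - 1 := by linarith
      refine ⟨fun _ _ => 1 / v1, fun _ _ => ⟨by positivity, by rw [div_lt_one hv0]; exact hv⟩,
        (biBalances_one _ v0 v1).2 ⟨?_, by simp⟩⟩
      have : 1 - 1 / v1 = (v1 - 1) / v1 := by field_simp
      rw [this, one_div_div, div_eq_iff hv1.ne']
      linarith
  | succ n ih =>
    intro v0 v1
    have hs := root_step ((n + 1 : ℕ) : ℝ) v0 v1 (by positivity)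
    rw [Nat.cast_succ (n + 1), ← hs]
    constructor
    · rintro ⟨r, hr, hb⟩
      obtain ⟨hb0, hb1⟩ := (biBalances_succ r v0 v1).1 hb
      exact ⟨r 0 Fin.elim0, hr _ _, (ih _ _).1 ⟨_, fun _ _ => hr _ _, hb0⟩,
        (ih _ _).1 ⟨_, fun _ _ => hr _ _, hb1⟩⟩
    · rintro ⟨p, hp, h0, h1⟩
      obtain ⟨s0, hs0, hb0⟩ := (ih _ _).2 h0
      obtain ⟨s1, hs1, hb1⟩ := (ih _ _).2 h1
      refine ⟨consStrategy p (fun b => bif b then s1 else s0), fun t => ?_, ?_⟩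
      · refine Fin.cases (fun _ => hp) (fun t qs => ?_) t
        change (bif qs (0 : Fin (t.1 + 1)) then s1 else s0) t _ ∈ _
        cases qs (0 : Fin (t.1 + 1))
        · exact hs0 _ _
        · exact hs1 _ _
      -- The subtree strategies of `consStrategy` are `s0` and `s1` by definitional unfolding.
      · exact (biBalances_succ _ v0 v1).2 ⟨hb0, hb1⟩

/-- `(V0, V1)` is an achievable value function of a bi-balanced depth-`d`
complete binary tree iff `V1 > d` and `V0 = f_d(V1)`. -/
theorem achievable_value_functions (d : ℕ) (hd : 1 ≤ d) (v0 v1 : ℝ) :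
    (∃ r : (t : Fin d) → (Fin t → Bool) → ℝ,
      (∀ (t : Fin d) (qs : Fin t → Bool), r t qs ∈ Set.Ioo (0:ℝ) 1) ∧
      biBalances d r v0 v1) ↔ ((d : ℝ) < v1 ∧ v0 = fd d v1) := by
  obtain ⟨n, rfl⟩ : ∃ n, d = n + 1 := ⟨d - 1, by omega⟩
  rw [fd_iff]
  exact achievable_iff n v0 v1
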